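/- Let r > 0 be a real number, q ∈ (0,1) and Θ ∈ (0,1). The negative binomial NB(r,q) distribution is invariant for the kernel p_Θ: for every natural number z, the series ∑_{x=0}^{∞} NB(x; r, q) · p_Θ(x, z) converges and equals NB(z; r, q), where NB(k; r, q) = Γ(k+r)/(k! Γ(r)) q^k (1-q)^r. -/

import Mathlib

/-- Negative binomial pmf: NB(k; r, p) = Γ(k+r)/(k! Γ(r)) · p^k (1-p)^r. -/
noncomputable def nbPMF (r p : ℝ) (k : ℕ) : ℝ :=
  Real.Gamma ((k : ℝ) + r) / ((k.factorial : ℝ) * Real.Gamma r) * p ^ k * (1 - p) ^ r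

/-- Transition kernel p_Θ(x, z) = ∑_{y=0}^{min(x,z)}
    Γ(z+r)/((z-y)! Γ(y+r)) · [q(1-Θ)]^{z-y} · [1-q(1-Θ)]^{r+y} · C(x,y) Θ^y (1-Θ)^{x-y}. -/
noncomputable def pKer (r q Θ : ℝ) (x z : ℕ) : ℝ :=
  ∑ y ∈ Finset.range (min x z + 1),
    Real.Gamma ((z : ℝ) + r) / (((z - y).factorial : ℝ) * Real.Gamma ((y : ℝ) + r)) *
      (q * (1 - Θ)) ^ (z - y) * (1 - q * (1 - Θ)) ^ (r + (y : ℝ)) *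
      (x.choose y : ℝ) * Θ ^ y * (1 - Θ) ^ (x - y)

/-!
Given `x`, the kernel first draws a binomial `y ∼ Bin(x, Θ)` and then moves to `z = y + m` with
`m ∼ NB(r + y, q (1 - Θ))`. Read backwards from `y`, the step `x ↦ y` is governed by the same law:
for `x ∼ NB(r, q)` the difference `x - y` is conditionally `NB(r + y, q (1 - Θ))`. Hence `x` and `z`
are exchangeable given `y`, the kernel is reversible with respect to `NB(r, q)`, and invariance
follows because the transition probabilities out of each state sum to one.
-/

theorem ascPochhammer_eval_eq_Gamma_div_Gamma {a : ℝ} (ha : ∀ k : ℕ, a ≠ -k) (n : ℕ) :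
    (ascPochhammer ℝ n).eval a = Real.Gamma (a + n) / Real.Gamma a := by
  have hC := Complex.Gamma_add_nat_div_Gamma_eq (n := n) (a : ℂ) fun k ↦ mod_cast ha k
  have hcast : (ascPochhammer ℂ n).eval (a : ℂ) = ((ascPochhammer ℝ n).eval a : ℝ) := by
    rw [← ascPochhammer_map Complex.ofRealHom, ← Complex.ofRealHom_eq_coe,
      Polynomial.eval_map_apply, Complex.ofRealHom_eq_coe]
  rw [hcast, ← Complex.ofReal_natCast, ← Complex.ofReal_add, Complex.Gamma_ofReal,
    Complex.Gamma_ofReal] at hC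
  exact_mod_cast hC.symm

theorem multichoose_eq_Gamma_div {a : ℝ} (ha : ∀ k : ℕ, a ≠ -k) (n : ℕ) :
    Ring.multichoose a n = Real.Gamma (n + a) / (n.factorial * Real.Gamma a) := by
  have h : (n.factorial : ℝ) * Ring.multichoose a n = Real.Gamma (n + a) / Real.Gamma a := by
    rw [← nsmul_eq_mul, Ring.factorial_nsmul_multichoose_eq_ascPochhammer,
      Polynomial.ascPochhammer_smeval_eq_eval, ascPochhammer_eval_eq_Gamma_div_Gamma ha, add_comm a]
  rw [mul_comm, ← div_div, ← h, mul_div_cancel_left₀ _ (by positivity)]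

theorem hasSum_multichoose_mul_pow (a : ℝ) {t : ℝ} (ht : |t| < 1) :
    HasSum (fun n : ℕ ↦ Ring.multichoose a n * t ^ n) (1 / (1 - t) ^ a) := by
  have hmem : t ∈ Metric.eball (0 : ℝ) 1 := by
    simpa [enorm_eq_nnnorm, ← NNReal.coe_lt_coe] using ht
  simpa [Ring.multichoose_eq, mul_comm] using
    (Real.one_div_one_sub_rpow_hasFPowerSeriesOnBall_zero a).hasSum hmem

theorem hasSum_nbPMF {a t : ℝ} (ha : ∀ k : ℕ, a ≠ -k) (ht : |t| < 1) : HasSum (nbPMF a t) 1 := by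
  have hpos : 0 < (1 - t) ^ a := Real.rpow_pos_of_pos (sub_pos.2 (lt_of_abs_lt ht)) a
  have h := (hasSum_multichoose_mul_pow a ht).mul_right ((1 - t) ^ a)
  rw [one_div_mul_cancel hpos.ne'] at h
  exact h.congr_fun fun n ↦ by rw [multichoose_eq_Gamma_div ha, nbPMF]

theorem sum_choose_mul_pow_mul_one_sub_pow {R : Type*} [CommRing R] (p : R) (n : ℕ) :
    ∑ y ∈ Finset.range (n + 1), (n.choose y : R) * p ^ y * (1 - p) ^ (n - y) = 1 := by
  simpa [bernsteinPolynomial, Polynomial.eval_finsetSum] using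
    congrArg (Polynomial.eval p) (bernsteinPolynomial.sum R n)

theorem hasSum_ite_le_sub {M : Type*} [AddCommMonoid M] [TopologicalSpace M] {f : ℕ → M} {s : M}
    (hf : HasSum f s) (y : ℕ) : HasSum (fun z ↦ if y ≤ z then f (z - y) else 0) s := by
  rw [← (add_left_injective y).hasSum_iff]
  · simpa [Function.comp_def] using hf
  · intro z hz
    exact if_neg fun h ↦ hz ⟨z - y, Nat.sub_add_cancel h⟩

section Kernel

variable (r q Θ : ℝ)

theorem pKer_eq_sum_choose_mul_nbPMF (x z : ℕ) :
    pKer r q Θ x z = ∑ y ∈ Finset.range (x + 1), (x.choose y : ℝ) * Θ ^ y * (1 - Θ) ^ (x - y) *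
      if y ≤ z then nbPMF (r + y) (q * (1 - Θ)) (z - y) else 0 := by
  have hsub : Finset.range (min x z + 1) ⊆ Finset.range (x + 1) := by simp
  rw [← Finset.sum_subset hsub fun y hyx hyxz ↦ ?_, pKer]
  · refine Finset.sum_congr rfl fun y hy ↦ ?_
    have hyz : y ≤ z := by grind
    have harg : ((z - y : ℕ) : ℝ) + (r + y) = z + r := by
      rw [Nat.cast_sub hyz]
      ring
    rw [if_pos hyz, nbPMF, harg, add_comm r (y : ℝ)]
    ring
  · rw [if_neg (by grind), mul_zero]

theorem hasSum_pKer (hr : ∀ k : ℕ, r ≠ -k) (hqΘ : |q * (1 - Θ)| < 1) (x : ℕ) :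
    HasSum (pKer r q Θ x) 1 := by
  have hjump (y : ℕ) : HasSum (nbPMF (r + y) (q * (1 - Θ))) 1 :=
    hasSum_nbPMF (fun k hk ↦ hr (k + y) (by push_cast; linarith)) hqΘ
  have h := hasSum_sum (s := Finset.range (x + 1)) fun y _ ↦
    (hasSum_ite_le_sub (hjump y) y).mul_left ((x.choose y : ℝ) * Θ ^ y * (1 - Θ) ^ (x - y))
  simp only [mul_one, sum_choose_mul_pow_mul_one_sub_pow] at h
  simpa only [← pKer_eq_sum_choose_mul_nbPMF] using h

-- On the right, the dependence on `i` is that of the weights of `NB(r + y, q (1 - Θ))`.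
theorem nbPMF_mul_choose_mul_pow (y i : ℕ) :
    nbPMF r q (y + i) * ((y + i).choose y * Θ ^ y * (1 - Θ) ^ i) =
      (q * Θ) ^ y * (1 - q) ^ r / (y.factorial * Real.Gamma r) *
        (Real.Gamma ((y + i : ℕ) + r) / i.factorial * (q * (1 - Θ)) ^ i) := by
  rw [nbPMF, Nat.cast_add_choose, mul_pow, mul_pow, pow_add]
  field_simp

theorem nbPMF_mul_pKer_comm (x z : ℕ) :
    nbPMF r q x * pKer r q Θ x z = nbPMF r q z * pKer r q Θ z x := by
  rw [pKer, pKer, min_comm, Finset.mul_sum, Finset.mul_sum]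
  refine Finset.sum_congr rfl fun y hy ↦ ?_
  obtain ⟨i, rfl⟩ : ∃ i, x = y + i := Nat.exists_eq_add_of_le (by grind)
  obtain ⟨j, rfl⟩ : ∃ j, z = y + j := Nat.exists_eq_add_of_le (by grind)
  let jump (m : ℕ) : ℝ := Real.Gamma ((y + m : ℕ) + r) / (m.factorial * Real.Gamma (y + r)) *
    (q * (1 - Θ)) ^ m * (1 - q * (1 - Θ)) ^ (r + y)
  rw [Nat.add_sub_cancel_left, Nat.add_sub_cancel_left]
  linear_combination jump j * nbPMF_mul_choose_mul_pow r q Θ y i -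
    jump i * nbPMF_mul_choose_mul_pow r q Θ y j

theorem pKer_invariant_general (hr : ∀ k : ℕ, r ≠ -k) (hqΘ : |q * (1 - Θ)| < 1) (z : ℕ) :
    HasSum (fun x : ℕ ↦ nbPMF r q x * pKer r q Θ x z) (nbPMF r q z) := by
  simpa only [nbPMF_mul_pKer_comm r q Θ _ z, mul_one] using
    (hasSum_pKer r q Θ hr hqΘ z).mul_left (nbPMF r q z)

end Kernel

/-- The NB(r,q) distribution is invariant for the kernel p_Θ:
    ∑_x NB(x; r, q) · p_Θ(x, z) converges and equals NB(z; r, q). -/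
theorem pKer_invariant
    (r q Θ : ℝ) (hr : 0 < r) (hq : q ∈ Set.Ioo (0 : ℝ) 1) (hΘ : Θ ∈ Set.Ioo (0 : ℝ) 1)
    (z : ℕ) :
    HasSum (fun x : ℕ => nbPMF r q x * pKer r q Θ x z) (nbPMF r q z) := by
  refine pKer_invariant_general r q Θ (fun n ↦ ((neg_nonpos.2 n.cast_nonneg).trans_lt hr).ne') ?_ z
  exact abs_lt.2 ⟨by nlinarith [hq.1, hΘ.2], by nlinarith [hq.1, hq.2, hΘ.1]⟩
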